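/- arXiv:2101.08080 — 2 statements merged into one kernel-verified Lean document; each statement's English description precedes it below -/
import Mathlib

section
/- Assume G ∈ C²(Ω × Y × ℝ) satisfies (Reg), (Mono), (Twist), (UC), (Gen_Ω) and (Gen_∂X), that X ⊆ Ω is compact, that ρ is a continuous probability density supported in X, and that int(X) ∩ {ρ > 0} is path-connected. Then for every ν ∈ ℝ^N with νᵢ > 0 for all i and Σᵢ νᵢ = 1, there exists ψ ∈ ℝ^N such that H(ψ) = ν, i.e., μ(Lagᵢ(ψ)) = νᵢ for all i ∈ {1,…,N} (existence of an Alexandrov solution of the semi-discrete generated Jacobian equation). -/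
set_option autoImplicit false

open MeasureTheory Set

noncomputable section

variable {d N : ℕ}

/-- Generalized Laguerre cell associated to `ψ` and index `i`. -/
def Lag (Ω : Set (EuclideanSpace ℝ (Fin d))) (G : EuclideanSpace ℝ (Fin d) → Fin N → ℝ → ℝ)
    (ψ : Fin N → ℝ) (i : Fin N) : Set (EuclideanSpace ℝ (Fin d)) :=
  {x ∈ Ω | ∀ j, G x j (ψ j) ≤ G x i (ψ i)}

/-- Interface `Γᵢⱼ(ψ)` between two cells. -/
def Gam (Ω : Set (EuclideanSpace ℝ (Fin d))) (G : EuclideanSpace ℝ (Fin d) → Fin N → ℝ → ℝ)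
    (ψ : Fin N → ℝ) (i j : Fin N) : Set (EuclideanSpace ℝ (Fin d)) :=
  {x ∈ Ω | G x i (ψ i) = G x j (ψ j)}

/-- The mass function `H(ψ) = (μ(Lagᵢ(ψ)))ᵢ` where `μ` has density `ρ`. -/
def Hfun (Ω : Set (EuclideanSpace ℝ (Fin d))) (G : EuclideanSpace ℝ (Fin d) → Fin N → ℝ → ℝ)
    (ρ : EuclideanSpace ℝ (Fin d) → ℝ) (ψ : Fin N → ℝ) : Fin N → ℝ :=
  fun i => ((volume.withDensity fun x => ENNReal.ofReal (ρ x)) (Lag Ω G ψ i)).toReal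

/-!
The mass `Hᵢ(ψ)` is continuous in `ψ`, because the twist condition makes the interfaces `Γᵢⱼ(ψ)`
Lebesgue null; it can only decrease when some other `ψⱼ` is lowered; and the masses add up to `1`.
Fix an index `i₀` and freeze `ψ i₀` at a value so low that for `ψᵢ = 0` (`i ≠ i₀`) the cell of `i₀`
takes all the mass. Among the `ψ` with `ψᵢ ≤ 0` and `Hᵢ(ψ) ≤ νᵢ` for `i ≠ i₀` choose a minimal one.
It exists by compactness: if some `ψᵢ` were too low, the cell of `i₀` would have no mass, whereas it
always has at least `ν i₀`. At a minimal point `Hᵢ(ψ) = νᵢ` for all `i ≠ i₀`, since otherwise `ψᵢ`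
could be lowered a little further; conservation of mass gives the equality at `i₀`.
-/

section Substitutes

variable {ι : Type*} {H : (ι → ℝ) → ι → ℝ} {ν l u : ι → ℝ} {i₀ : ι}

theorem exists_minimal_of_isCompact {α β : Type*} [TopologicalSpace α] [PartialOrder α]
    [TopologicalSpace β] [LinearOrder β] [ClosedIicTopology β] {S : Set α} (hS : IsCompact S)
    (hne : S.Nonempty) {f : α → β} (hf : ContinuousOn f S) (hmono : StrictMono f) :
    ∃ a, Minimal (· ∈ S) a := by
  obtain ⟨a, haS, hmin⟩ := hS.exists_isMinOn hne hf
  refine ⟨a, minimal_iff_forall_lt.2 ⟨haS, fun b hba hbS => ?_⟩⟩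
  exact (hmono hba).not_ge (hmin hbS)

theorem le_of_sum_eq_of_forall_ne_le [Fintype ι] {M : Type*} [AddCommMonoid M] [PartialOrder M]
    [IsOrderedCancelAddMonoid M] {f g : ι → M} (hsum : ∑ i, f i = ∑ i, g i)
    (hle : ∀ i ≠ i₀, f i ≤ g i) : g i₀ ≤ f i₀ := by
  classical
  rw [← Finset.add_sum_erase _ f (Finset.mem_univ i₀),
    ← Finset.add_sum_erase _ g (Finset.mem_univ i₀)] at hsum
  have hrest : ∑ i ∈ Finset.univ.erase i₀, f i ≤ ∑ i ∈ Finset.univ.erase i₀, g i :=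
    Finset.sum_le_sum fun i hi => hle i (Finset.ne_of_mem_erase hi)
  exact le_of_add_le_add_right (hsum.symm.trans_le (add_le_add_right hrest (f i₀)))

/-- The points below `u` that agree with `u` at `i₀` and at which every component of `H` other than
the `i₀`-th is at most its target value in `ν`. A minimal such point solves `H ψ = ν`. -/
def subsolutions (H : (ι → ℝ) → ι → ℝ) (ν u : ι → ℝ) (i₀ : ι) : Set (ι → ℝ) :=
  {ψ | ψ ≤ u ∧ ψ i₀ = u i₀ ∧ ∀ i ≠ i₀, H ψ i ≤ ν i}

theorem isClosed_subsolutions (hcont : ∀ i, Continuous fun ψ => H ψ i) :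
    IsClosed (subsolutions H ν u i₀) := by
  have hinter : subsolutions H ν u i₀ =
      Iic u ∩ ({ψ | ψ i₀ = u i₀} ∩ ⋂ i ≠ i₀, {ψ | H ψ i ≤ ν i}) := by
    ext ψ
    simp [subsolutions]
  rw [hinter]
  exact isClosed_Iic.inter <| (isClosed_eq (continuous_apply i₀) continuous_const).inter <|
    isClosed_biInter fun i _ => isClosed_le (hcont i) continuous_const

theorem isCompact_subsolutions [Fintype ι] (hcont : ∀ i, Continuous fun ψ => H ψ i)
    (hsum : ∀ ψ, ∑ i, H ψ i = ∑ i, ν i)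
    (hl : ∀ ψ, ψ i₀ = u i₀ → (∃ i, ψ i < l i) → H ψ i₀ < ν i₀) :
    IsCompact (subsolutions H ν u i₀) := by
  refine (isCompact_Icc (a := l) (b := u)).of_isClosed_subset (isClosed_subsolutions hcont) ?_
  refine fun ψ hψ => ⟨fun i => ?_, hψ.1⟩
  by_contra! hlt
  exact (hl ψ hψ.2.1 ⟨i, hlt⟩).not_ge (le_of_sum_eq_of_forall_ne_le (hsum ψ) hψ.2.2)

theorem eq_of_minimal_subsolutions (hcont : ∀ i, Continuous fun ψ => H ψ i)
    (hmono : ∀ φ ψ, φ ≤ ψ → ∀ i, φ i = ψ i → H φ i ≤ H ψ i) {ψ : ι → ℝ}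
    (hψ : Minimal (· ∈ subsolutions H ν u i₀) ψ) {i : ι} (hi : i ≠ i₀) : H ψ i = ν i := by
  classical
  obtain ⟨hψu, hψi₀, hψν⟩ := hψ.prop
  refine (hψν i hi).antisymm (not_lt.1 fun hlt => ?_)
  have hlower : Continuous fun v => H (Function.update ψ i v) i :=
    (hcont i).comp (continuous_const.update i continuous_id)
  have hev : ∀ᶠ v in nhds (ψ i), H (Function.update ψ i v) i < ν i :=
    hlower.continuousAt.eventually_lt continuousAt_const (by simpa using hlt)
  obtain ⟨v, hvν, hv⟩ := ((hev.filter_mono nhdsWithin_le_nhds).and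
    (self_mem_nhdsWithin (s := Iio (ψ i)))).exists
  have hle : Function.update ψ i v ≤ ψ := update_le_self_iff.2 (le_of_lt hv)
  have hmem : Function.update ψ i v ∈ subsolutions H ν u i₀ := by
    refine ⟨hle.trans hψu, by rwa [Function.update_of_ne hi.symm], fun j hj => ?_⟩
    obtain rfl | hji := eq_or_ne j i
    · exact hvν.le
    · exact (hmono _ _ hle j (Function.update_of_ne hji _ _)).trans (hψν j hj)
  have hge : ψ i ≤ v := by simpa using hψ.le_of_le hmem hle i
  exact hge.not_gt hv

theorem exists_eq_of_continuous_of_sum_eq [Fintype ι] (hcont : ∀ i, Continuous fun ψ => H ψ i)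
    (hmono : ∀ φ ψ, φ ≤ ψ → ∀ i, φ i = ψ i → H φ i ≤ H ψ i)
    (hsum : ∀ ψ, ∑ i, H ψ i = ∑ i, ν i) (hu : ∀ i ≠ i₀, H u i ≤ ν i)
    (hl : ∀ ψ, ψ i₀ = u i₀ → (∃ i, ψ i < l i) → H ψ i₀ < ν i₀) :
    ∃ ψ, ∀ i, H ψ i = ν i := by
  obtain ⟨ψ, hψ⟩ := exists_minimal_of_isCompact (isCompact_subsolutions hcont hsum hl)
    ⟨u, le_rfl, rfl, hu⟩ (f := fun ψ => ∑ i, ψ i) (by fun_prop) Fintype.sum_strictMono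
  have heq : ∀ i ≠ i₀, H ψ i = ν i := fun i => eq_of_minimal_subsolutions hcont hmono hψ
  refine ⟨ψ, fun i => ?_⟩
  obtain rfl | hi := eq_or_ne i i₀
  · exact le_antisymm (le_of_sum_eq_of_forall_ne_le (hsum ψ).symm fun j hj => (heq j hj).ge)
      (le_of_sum_eq_of_forall_ne_le (hsum ψ) fun j hj => (heq j hj).le)
  · exact heq i hi

end Substitutes

theorem tendsto_measureReal_of_ae_eventually_mem_iff {E κ : Type*} [MeasurableSpace E]
    {μ : Measure E} [IsFiniteMeasure μ] {L : Filter κ} [L.IsCountablyGenerated] {s : κ → Set E}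
    {t : Set E} (hs : ∀ k, NullMeasurableSet (s k) μ) (ht : NullMeasurableSet t μ)
    (h : ∀ᵐ x ∂μ, ∀ᶠ k in L, x ∈ s k ↔ x ∈ t) :
    Filter.Tendsto (fun k => μ.real (s k)) L (nhds (μ.real t)) := by
  refine (ENNReal.tendsto_toReal (measure_ne_top μ t)).comp ?_
  simp_rw [← lintegral_indicator_one₀ ht, ← lintegral_indicator_one₀ (hs _)]
  refine tendsto_lintegral_filter_of_dominated_convergence' 1
    (.of_forall fun k => aemeasurable_one.indicator₀ (hs k))
    (.of_forall fun k => .of_forall fun x => indicator_le_self' (fun _ _ => zero_le) x)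
    (by simp) ?_
  filter_upwards [h] with x hx
  refine tendsto_nhds_of_eventually_eq (hx.mono fun k hk => ?_)
  by_cases hxt : x ∈ t <;> simp [hxt, hk]

section LaguerreCell

variable {E ι : Type*} {G : E → ι → ℝ → ℝ} {φ ψ : ι → ℝ} {i : ι}

/-- The Laguerre cell of `i` for the generating function `G` on the whole space: the points at which
the `i`-th value `G x i (ψ i)` is largest. `Lag Ω G ψ i` is its intersection with `Ω`. -/
def laguerreCell (G : E → ι → ℝ → ℝ) (ψ : ι → ℝ) (i : ι) : Set E :=
  {x | ∀ j, G x j (ψ j) ≤ G x i (ψ i)}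

theorem mem_laguerreCell_of_le {x : E} (hanti : ∀ j, Antitone (G x j)) (hφψ : φ ≤ ψ)
    (hi : φ i = ψ i) (hx : x ∈ laguerreCell G φ i) : x ∈ laguerreCell G ψ i := fun j =>
  calc G x j (ψ j) ≤ G x j (φ j) := hanti j (hφψ j)
    _ ≤ G x i (φ i) := hx j
    _ = G x i (ψ i) := by rw [hi]

theorem iUnion_laguerreCell [Finite ι] [Nonempty ι] : ⋃ i, laguerreCell G ψ i = univ :=
  iUnion_eq_univ_iff.2 fun x => Finite.exists_max fun i => G x i (ψ i)

theorem eventually_mem_laguerreCell_iff [Finite ι] {x : E} (hcont : ∀ j, Continuous (G x j))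
    (hne : ∀ j, j ≠ i → G x j (ψ j) ≠ G x i (ψ i)) :
    ∀ᶠ φ in nhds ψ, x ∈ laguerreCell G φ i ↔ x ∈ laguerreCell G ψ i := by
  have hval (j : ι) : ContinuousAt (fun φ : ι → ℝ => G x j (φ j)) ψ :=
    ((hcont j).comp (continuous_apply j)).continuousAt
  by_cases hx : x ∈ laguerreCell G ψ i
  · have hmem : ∀ᶠ φ in nhds ψ, x ∈ laguerreCell G φ i := Filter.eventually_all.2 fun j => by
      obtain rfl | hji := eq_or_ne j i
      · exact .of_forall fun _ => le_rfl
      · filter_upwards [(hval j).eventually_lt (hval i) ((hx j).lt_of_ne (hne j hji))] with φ hφ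
        exact hφ.le
    exact hmem.mono fun φ hφ => iff_of_true hφ hx
  · obtain ⟨j, hj⟩ : ∃ j, G x i (ψ i) < G x j (ψ j) := by
      simpa only [laguerreCell, mem_ofPred_eq, not_forall, not_le] using hx
    filter_upwards [(hval i).eventually_lt (hval j) hj] with φ hφ
    exact iff_of_false (fun h => (h j).not_gt hφ) hx

variable [MeasurableSpace E] {μ : Measure E}

theorem measureReal_laguerreCell_eq_zero {j : ι}
    (hlt : ∀ᵐ x ∂μ, G x i (ψ i) < G x j (ψ j)) : μ.real (laguerreCell G ψ i) = 0 := by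
  have hnull : μ (laguerreCell G ψ i) = 0 :=
    measure_eq_zero_iff_ae_notMem.2 (hlt.mono fun x hx h => (h j).not_gt hx)
  rw [measureReal_def, hnull, ENNReal.toReal_zero]

theorem nullMeasurableSet_laguerreCell [Countable ι]
    (hmeas : ∀ i v, AEMeasurable (fun x => G x i v) μ) :
    NullMeasurableSet (laguerreCell G ψ i) μ := by
  simp only [laguerreCell, ofPred_forall]
  exact .iInter fun j => nullMeasurableSet_le (hmeas j (ψ j)) (hmeas i (ψ i))

theorem sum_measureReal_laguerreCell [Fintype ι] [Nonempty ι] [IsFiniteMeasure μ]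
    (hmeas : ∀ i v, AEMeasurable (fun x => G x i v) μ)
    (hne : ∀ i j, i ≠ j → ∀ᵐ x ∂μ, G x i (ψ i) ≠ G x j (ψ j)) :
    ∑ i, μ.real (laguerreCell G ψ i) = μ.real univ := by
  have hdisj (i j : ι) (hij : i ≠ j) : AEDisjoint μ (laguerreCell G ψ i) (laguerreCell G ψ j) :=
    measure_eq_zero_iff_ae_notMem.2 <|
      (hne i j hij).mono fun x hx h => hx ((h.2 i).antisymm (h.1 j))
  rw [← iUnion_laguerreCell (G := G) (ψ := ψ), ← biUnion_univ, ← Finset.coe_univ]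
  exact (measureReal_biUnion_finset₀ (fun i _ j _ => hdisj i j)
    fun i _ => nullMeasurableSet_laguerreCell hmeas).symm

theorem continuous_measureReal_laguerreCell [Finite ι] [IsFiniteMeasure μ]
    (hmeas : ∀ i v, AEMeasurable (fun x => G x i v) μ)
    (hcont : ∀ᵐ x ∂μ, ∀ i, Continuous (G x i))
    (hne : ∀ i j, i ≠ j → ∀ a b, ∀ᵐ x ∂μ, G x i a ≠ G x j b) (i : ι) :
    Continuous fun ψ => μ.real (laguerreCell G ψ i) := by
  refine continuous_iff_continuousAt.2 fun ψ => tendsto_measureReal_of_ae_eventually_mem_iff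
    (fun φ => nullMeasurableSet_laguerreCell hmeas) (nullMeasurableSet_laguerreCell hmeas) ?_
  have hnotie : ∀ᵐ x ∂μ, ∀ j, j ≠ i → G x j (ψ j) ≠ G x i (ψ i) :=
    ae_all_iff.2 fun j => Filter.eventually_imp_distrib_left.2 fun hji => hne j i hji _ _
  filter_upwards [hcont, hnotie] with x hx hxi using eventually_mem_laguerreCell_iff hx hxi

theorem measureReal_laguerreCell_le_of_le [IsFiniteMeasure μ]
    (hanti : ∀ᵐ x ∂μ, ∀ i, Antitone (G x i)) (hφψ : φ ≤ ψ) (hi : φ i = ψ i) :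
    μ.real (laguerreCell G φ i) ≤ μ.real (laguerreCell G ψ i) :=
  ENNReal.toReal_mono (by finiteness) <|
    measure_mono_ae (hanti.mono fun _ hx => mem_laguerreCell_of_le hx hφψ hi)

theorem exists_forall_ne_measureReal_laguerreCell_eq_zero [Finite ι]
    (hbdd : ∀ i v, ∃ C, ∀ᵐ x ∂μ, G x i v ≤ C) (htop : ∀ i M, ∃ v, ∀ᵐ x ∂μ, M ≤ G x i v) (i₀ : ι) :
    ∃ u, ∀ i ≠ i₀, μ.real (laguerreCell G u i) = 0 := by
  classical
  choose c hc using fun i => hbdd i 0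
  obtain ⟨C, hC⟩ := (finite_range c).bddAbove
  obtain ⟨α, hα⟩ := htop i₀ (C + 1)
  refine ⟨Function.update 0 i₀ α, fun i hi => measureReal_laguerreCell_eq_zero (j := i₀) ?_⟩
  filter_upwards [hc i, hα] with x hxi hxα
  simp only [Function.update_self, Function.update_of_ne hi, Pi.zero_apply]
  linarith [hC (mem_range_self i)]

theorem exists_measureReal_laguerreCell_eq_zero_of_lt
    (hanti : ∀ᵐ x ∂μ, ∀ i, Antitone (G x i)) (hbdd : ∀ i v, ∃ C, ∀ᵐ x ∂μ, G x i v ≤ C)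
    (htop : ∀ i M, ∃ v, ∀ᵐ x ∂μ, M ≤ G x i v) (i₀ : ι) (α : ℝ) :
    ∃ l : ι → ℝ, ∀ ψ, ψ i₀ = α → (∃ i, ψ i < l i) → μ.real (laguerreCell G ψ i₀) = 0 := by
  obtain ⟨C, hC⟩ := hbdd i₀ α
  choose l hl using fun i => htop i (C + 1)
  refine ⟨l, fun ψ hψ ⟨i, hi⟩ => measureReal_laguerreCell_eq_zero (j := i) ?_⟩
  filter_upwards [hanti, hC, hl i] with x hx hxC hxl
  calc G x i₀ (ψ i₀) ≤ C := by rwa [hψ]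
    _ < C + 1 := lt_add_one C
    _ ≤ G x i (l i) := hxl
    _ ≤ G x i (ψ i) := hx i hi.le

theorem exists_forall_measureReal_laguerreCell_eq [Fintype ι] [IsFiniteMeasure μ]
    (hmeas : ∀ i v, AEMeasurable (fun x => G x i v) μ)
    (hcont : ∀ᵐ x ∂μ, ∀ i, Continuous (G x i)) (hanti : ∀ᵐ x ∂μ, ∀ i, Antitone (G x i))
    (hne : ∀ i j, i ≠ j → ∀ a b, ∀ᵐ x ∂μ, G x i a ≠ G x j b)
    (hbdd : ∀ i v, ∃ C, ∀ᵐ x ∂μ, G x i v ≤ C) (htop : ∀ i M, ∃ v, ∀ᵐ x ∂μ, M ≤ G x i v)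
    {ν : ι → ℝ} (hν : ∀ i, 0 ≤ ν i) (hνμ : ∑ i, ν i = μ.real univ) :
    ∃ ψ, ∀ i, μ.real (laguerreCell G ψ i) = ν i := by
  by_cases hpos : ∃ i₀, 0 < ν i₀
  · obtain ⟨i₀, hi₀⟩ := hpos
    have : Nonempty ι := ⟨i₀⟩
    obtain ⟨u, hu⟩ := exists_forall_ne_measureReal_laguerreCell_eq_zero hbdd htop i₀
    obtain ⟨l, hl⟩ := exists_measureReal_laguerreCell_eq_zero_of_lt hanti hbdd htop i₀ (u i₀)
    exact exists_eq_of_continuous_of_sum_eq (H := fun ψ i => μ.real (laguerreCell G ψ i))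
      (continuous_measureReal_laguerreCell hmeas hcont hne)
      (fun φ ψ hφψ i => measureReal_laguerreCell_le_of_le hanti hφψ)
      (fun ψ => (sum_measureReal_laguerreCell hmeas fun i j hij => hne i j hij _ _).trans hνμ.symm)
      (fun i hi => (hu i hi).trans_le (hν i)) (fun ψ hψ hlt => (hl ψ hψ hlt).trans_lt hi₀)
  · have hν0 (i : ι) : ν i = 0 := (not_lt.1 fun h => hpos ⟨i, h⟩).antisymm (hν i)
    have hμ0 : μ.real univ = 0 := hνμ ▸ Finset.sum_eq_zero fun i _ => hν0 i
    refine ⟨0, fun i => (hν0 i).symm ▸ measureReal_nonneg.antisymm' ?_⟩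
    exact (measureReal_mono (subset_univ _)).trans_eq hμ0

end LaguerreCell

section Twist

variable {E : Type*} [NormedAddCommGroup E] [NormedSpace ℝ E] [FiniteDimensional ℝ E]
  [MeasurableSpace E] [BorelSpace E] {vol : Measure E} [vol.IsAddHaarMeasure]

theorem measure_eq_zero_of_eqOn_const_of_hasFDerivWithinAt_ne_zero {s : Set E}
    (hs : MeasurableSet s) {f : E → ℝ} {f' : E → E →L[ℝ] ℝ} {c : ℝ} (hf : EqOn f (fun _ => c) s)
    (hf' : ∀ x ∈ s, HasFDerivWithinAt f (f' x) s x) (hne : ∀ x ∈ s, f' x ≠ 0) : vol s = 0 := by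
  cases subsingleton_or_nontrivial E with
  | inl _ =>
    rw [eq_empty_of_forall_notMem fun x hx => hne x hx (Subsingleton.elim _ _), measure_empty]
  | inr _ =>
    obtain ⟨e, he⟩ := exists_ne (0 : E)
    -- `ApproximatesLinearOn.norm_fderiv_sub_le` is stated for maps `E → E`, whence the vector `e`.
    have happrox : ApproximatesLinearOn (fun x => f x • e) (0 : E →L[ℝ] E) s 0 :=
      fun x hx z hz => by simp [hf hx, hf hz]
    have hderiv := happrox.norm_fderiv_sub_le vol hs (fun x => (f' x).smulRight e)
      fun x hx => (hf' x hx).smul_const e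
    refine measure_eq_zero_iff_ae_notMem.2 ?_
    filter_upwards [(ae_restrict_iff' hs).1 hderiv] with x hx hxs
    have hzero : f' x = 0 ∨ e = 0 := by simpa using hx hxs
    exact hne x hxs (hzero.resolve_right he)

theorem measure_setOf_eq_eq_zero_of_hasFDerivAt_ne {X : Set E} (hX : IsClosed X)
    {f g : E → ℝ} {f' g' : E → E →L[ℝ] ℝ} (hf : ∀ x ∈ X, HasFDerivAt f (f' x) x)
    (hg : ∀ x ∈ X, HasFDerivAt g (g' x) x) (hne : ∀ x ∈ X, f x = g x → f' x ≠ g' x) :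
    vol {x ∈ X | f x = g x} = 0 := by
  have hclosed : IsClosed {x ∈ X | f x = g x} :=
    hX.isClosed_eq (fun x hx => (hf x hx).continuousAt.continuousWithinAt)
      fun x hx => (hg x hx).continuousAt.continuousWithinAt
  refine measure_eq_zero_of_eqOn_const_of_hasFDerivWithinAt_ne_zero hclosed.measurableSet
    (f := f - g) (f' := f' - g') (c := 0) (fun x hx => sub_eq_zero.2 hx.2)
    (fun x hx => ((hf x hx.1).sub (hg x hx.1)).hasFDerivWithinAt)
    (fun x hx => sub_ne_zero.2 (hne x hx.1 hx.2))

theorem exists_forall_measureReal_laguerreCell_eq_of_twist {ι : Type*} [Fintype ι] {μ : Measure E}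
    [IsFiniteMeasure μ] (hμ : μ ≪ vol) {X : Set E} (hX : IsCompact X) (hμX : ∀ᵐ x ∂μ, x ∈ X)
    {G : E → ι → ℝ → ℝ} {G' : E → ι → ℝ → E →L[ℝ] ℝ}
    (hG' : ∀ x ∈ X, ∀ i v, HasFDerivAt (fun z => G z i v) (G' x i v) x)
    (hcont : ∀ x ∈ X, ∀ i, Continuous (G x i)) (hanti : ∀ x ∈ X, ∀ i, Antitone (G x i))
    (htwist : ∀ x ∈ X, Function.Injective fun q : ι × ℝ => (G x q.1 q.2, G' x q.1 q.2))
    (htop : ∀ i M, ∃ v, ∀ x ∈ X, M ≤ G x i v)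
    {ν : ι → ℝ} (hν : ∀ i, 0 ≤ ν i) (hνμ : ∑ i, ν i = μ.real univ) :
    ∃ ψ, ∀ i, μ.real (laguerreCell G ψ i) = ν i := by
  have hcontOn (i : ι) (v : ℝ) : ContinuousOn (fun x => G x i v) X :=
    fun x hx => (hG' x hx i v).continuousAt.continuousWithinAt
  have hmeas (i : ι) (v : ℝ) : AEMeasurable (fun x => G x i v) μ := by
    rw [← Measure.restrict_eq_self_of_ae_mem hμX]
    exact (hcontOn i v).aemeasurable hX.measurableSet
  have hne (i j : ι) (hij : i ≠ j) (a b : ℝ) : ∀ᵐ x ∂μ, G x i a ≠ G x j b := by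
    have hnull : vol {x ∈ X | G x i a = G x j b} = 0 :=
      measure_setOf_eq_eq_zero_of_hasFDerivAt_ne hX.isClosed
        (fun x hx => hG' x hx i a) (fun x hx => hG' x hx j b) fun x hx h h' =>
          hij (congrArg Prod.fst (@htwist x hx (i, a) (j, b) (Prod.ext h h')))
    filter_upwards [hμX, measure_eq_zero_iff_ae_notMem.1 (hμ hnull)] with x hxX hx h
    exact hx ⟨hxX, h⟩
  have hbdd (i : ι) (v : ℝ) : ∃ C, ∀ᵐ x ∂μ, G x i v ≤ C := by
    obtain ⟨C, hC⟩ := hX.bddAbove_image (hcontOn i v)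
    exact ⟨C, hμX.mono fun x hx => hC (mem_image_of_mem _ hx)⟩
  exact exists_forall_measureReal_laguerreCell_eq hmeas (hμX.mono hcont) (hμX.mono hanti) hne hbdd
    (fun i M => (htop i M).imp fun v hv => hμX.mono hv) hν hνμ

end Twist

theorem exists_alexandrov_solution_general {E ι : Type*} [NormedAddCommGroup E]
    [InnerProductSpace ℝ E] [FiniteDimensional ℝ E] [MeasurableSpace E] [BorelSpace E]
    {vol : Measure E} [vol.IsAddHaarMeasure] [Fintype ι] {Ω : Set E}
    {G : E → ι → ℝ → ℝ} {Gx : E → ι → ℝ → E}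
    (hGx : ∀ x ∈ Ω, ∀ i v, HasGradientAt (fun z => G z i v) (Gx x i v) x)
    (hcont : ∀ x ∈ Ω, ∀ i, Continuous (G x i)) (hanti : ∀ x ∈ Ω, ∀ i, Antitone (G x i))
    (hTwist : ∀ x ∈ Ω, Function.Injective fun q : ι × ℝ => (G x q.1 q.2, Gx x q.1 q.2))
    (hUC : ∀ i M, ∃ v, ∀ x ∈ Ω, M ≤ G x i v)
    {X : Set E} (hX : IsCompact X) (hXΩ : X ⊆ Ω)
    {ρ : E → ℝ} (hρ : Integrable ρ vol) (hρ0 : 0 ≤ᵐ[vol] ρ) (hρX : Function.support ρ ⊆ X)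
    {ν : ι → ℝ} (hν : ∀ i, 0 ≤ ν i) (hνρ : ∑ i, ν i = ∫ x, ρ x ∂vol) :
    ∃ ψ : ι → ℝ, ∀ i, (vol.withDensity fun x => ENNReal.ofReal (ρ x)).real
      {x ∈ Ω | ∀ j, G x j (ψ j) ≤ G x i (ψ i)} = ν i := by
  set μ := vol.withDensity fun x => ENNReal.ofReal (ρ x) with hμ
  have : IsFiniteMeasure μ := isFiniteMeasure_withDensity_ofReal hρ.2
  have hμX : ∀ᵐ x ∂μ, x ∈ X := (ae_withDensity_iff' hρ.1.aemeasurable.ennreal_ofReal).2 <|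
    .of_forall fun x hx => hρX fun h0 => hx (by rw [h0, ENNReal.ofReal_zero])
  have hμuniv : μ.real univ = ∫ x, ρ x ∂vol := by
    rw [integral_eq_lintegral_of_nonneg_ae hρ0 hρ.1, measureReal_def, hμ,
      withDensity_apply _ .univ, Measure.restrict_univ]
  have hTwist' (x : E) (hx : x ∈ X) :=
    (Function.injective_id.prodMap (InnerProductSpace.toDual ℝ E).injective).comp
      (hTwist x (hXΩ hx))
  obtain ⟨ψ, hψ⟩ := exists_forall_measureReal_laguerreCell_eq_of_twist
    (withDensity_absolutelyContinuous _ _) hX hμX (fun x hx => hGx x (hXΩ hx))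
    (fun x hx => hcont x (hXΩ hx)) (fun x hx => hanti x (hXΩ hx)) hTwist'
    (fun i M => (hUC i M).imp fun v hv x hx => hv x (hXΩ hx)) hν (hνρ.trans hμuniv.symm)
  refine ⟨ψ, fun i => (measureReal_congr ?_).trans (hψ i)⟩
  filter_upwards [hμX] with x hx
  exact propext (and_iff_right (hXΩ hx))

/-- Existence of an Alexandrov solution of the semi-discrete generated Jacobian
equation `H(ψ) = ν`. -/
theorem exists_alexandrov_solution
    (hd : 1 ≤ d) (hN : 1 ≤ N)
    {Ω : Set (EuclideanSpace ℝ (Fin d))} (hΩo : IsOpen Ω) (hΩb : Bornology.IsBounded Ω)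
    (y : Fin N → EuclideanSpace ℝ (Fin d)) (hy : Function.Injective y)
    (G : EuclideanSpace ℝ (Fin d) → Fin N → ℝ → ℝ)
    (Gx : EuclideanSpace ℝ (Fin d) → Fin N → ℝ → EuclideanSpace ℝ (Fin d))
    (Gv : EuclideanSpace ℝ (Fin d) → Fin N → ℝ → ℝ)
    (hGx : ∀ x ∈ Ω, ∀ (i : Fin N) (v : ℝ), HasGradientAt (fun x' => G x' i v) (Gx x i v) x)
    (hGv : ∀ x ∈ Ω, ∀ (i : Fin N) (v : ℝ), HasDerivAt (fun v' => G x i v') (Gv x i v) v)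
    (hGxc : ∀ i : Fin N, ContinuousOn (fun q : EuclideanSpace ℝ (Fin d) × ℝ => Gx q.1 i q.2) (Ω ×ˢ Set.univ))
    (hGvc : ∀ i : Fin N, ContinuousOn (fun q : EuclideanSpace ℝ (Fin d) × ℝ => Gv q.1 i q.2) (Ω ×ˢ Set.univ))
    (hG2 : ∀ i : Fin N, ContDiffOn ℝ 2 (fun q : EuclideanSpace ℝ (Fin d) × ℝ => G q.1 i q.2) (Ω ×ˢ Set.univ))
    (hReg : ∀ α β : ℝ, α < β → ∃ C : ℝ, ∀ x ∈ Ω, ∀ i : Fin N, ∀ v ∈ Set.Icc α β, ‖Gx x i v‖ ≤ C)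
    (hMono : ∀ x ∈ Ω, ∀ (i : Fin N) (v : ℝ), Gv x i v < 0)
    (hTwist : ∀ x ∈ Ω, Function.Injective fun q : Fin N × ℝ => (G x q.1 q.2, Gx x q.1 q.2))
    (hUC : ∀ (i : Fin N) (M : ℝ), ∃ v₀ : ℝ, ∀ v ≤ v₀, ∀ x ∈ Ω, M ≤ G x i v)
    {X : Set (EuclideanSpace ℝ (Fin d))} (hXc : IsCompact X) (hXΩ : X ⊆ Ω)
    (ρ : EuclideanSpace ℝ (Fin d) → ℝ) (hρc : Continuous ρ) (hρ0 : ∀ x, 0 ≤ ρ x)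
    (hρsupp : tsupport ρ ⊆ X) (hρ1 : (∫ x, ρ x) = 1)
    (hGenΩ : ∀ (ψ : Fin N → ℝ) (i j k : Fin N), i ≠ j → i ≠ k → j ≠ k →
      μH[(d : ℝ) - 1] (Gam Ω G ψ i j ∩ Gam Ω G ψ i k) = 0)
    (hGenX : ∀ (ψ : Fin N → ℝ) (i j : Fin N), i ≠ j →
      μH[(d : ℝ) - 1] (Gam Ω G ψ i j ∩ frontier X) = 0)
    (hpc : IsPathConnected (interior X ∩ {x | 0 < ρ x}))
 :
    ∀ ν : Fin N → ℝ, (∀ i : Fin N, 0 < ν i) → (∑ i, ν i) = 1 →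
      ∃ ψ : Fin N → ℝ, ∀ i : Fin N, Hfun Ω G ρ ψ i = ν i := by
  exact fun ν hν hν1 => exists_alexandrov_solution_general hGx
    (fun x hx i => continuous_iff_continuousAt.2 fun v => (hGv x hx i v).continuousAt)
    (fun x hx i => antitone_of_hasDerivAt_nonpos (hGv x hx i) fun v => (hMono x hx i v).le)
    hTwist (fun i M => (hUC i M).imp fun v hv => hv v le_rfl) hXc hXΩ
    (.of_integral_ne_zero (hρ1 ▸ one_ne_zero)) (.of_forall hρ0)
    ((subset_tsupport ρ).trans hρsupp) (fun i => (hν i).le) (hν1.trans hρ1.symm)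
end
end

section
/- Let Ω ⊆ ℝ² be open and bounded, Y = {y₁,…,y_N} ⊆ ℝ² distinct points such that no three points of Y are collinear, and G(x,y,v) = 1/(2v) − (v/2)‖x − y‖². Then for every ψ ∈ (0,∞)^N and all distinct indices i, j, k in {1,…,N}, the set Γᵢⱼ(ψ) ∩ Γᵢₖ(ψ) has one-dimensional Hausdorff measure zero, where Γᵢⱼ(ψ) = {x ∈ Ω : G(x,yᵢ,ψᵢ) = G(x,y_j,ψ_j)}; that is, G satisfies the genericity condition (Gen_Ω). (Indeed each Γᵢⱼ(ψ) is contained in a circle centered on the line through yᵢ and y_j or in a line, and two such distinct circles/lines with different centers intersect in at most two points.) -/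
set_option autoImplicit false

open MeasureTheory Set

noncomputable section

/-!
Where the functions `G(·, yᵢ, ψᵢ)` share the value `h`, each squared distance `‖x - yᵢ‖²` is an
affine function of `h`. Let `a ≠ b` be two such points and let `x` be a third one. Its value is
`(1 - t) h(a) + t h(b)` for some `t`, so its squared distances to all the `yᵢ` interpolate those of
`a` and `b`. By Stewart's theorem they differ from the squared distances of the point
`(1 - t) a + t b` by `t (1 - t) ‖a - b‖²`, which does not depend on `i`. As the `yᵢ` affinely span
the space, this forces `x = (1 - t) a + t b`, hence `t (1 - t) = 0` and `x ∈ {a, b}`.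
-/

theorem encard_le_two_of_forall_eq_or_eq {α : Type*} {s : Set α}
    (h : ∀ a ∈ s, ∀ b ∈ s, a ≠ b → ∀ x ∈ s, x = a ∨ x = b) : s.encard ≤ 2 := by
  rcases s.subsingleton_or_nontrivial with hs | ⟨a, ha, b, hb, hab⟩
  · exact (encard_le_one_iff_subsingleton.2 hs).trans one_le_two
  · calc s.encard ≤ ({a, b} : Set α).encard := encard_le_encard (h a ha b hb hab)
      _ = 2 := encard_pair hab

section SquaredDistances

variable {ι V P : Type*} [NormedAddCommGroup V] [InnerProductSpace ℝ V] [MetricSpace P]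
  [NormedAddTorsor V P]

theorem two_mul_inner_vsub_vsub_eq_dist_sq (p q x z : P) :
    2 * inner ℝ (p -ᵥ q) (x -ᵥ z) =
      dist x q ^ 2 - dist x p ^ 2 - (dist z q ^ 2 - dist z p ^ 2) := by
  have dist_sq_expand (w : P) :
      dist w p ^ 2 = dist w q ^ 2 - 2 * inner ℝ (w -ᵥ q) (p -ᵥ q) + dist p q ^ 2 := by
    simp only [dist_eq_norm_vsub V, ← norm_sub_sq_real, vsub_sub_vsub_cancel_right]
  rw [dist_sq_expand x, dist_sq_expand z, ← vsub_sub_vsub_cancel_right x z q, inner_sub_right,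
    real_inner_comm (x -ᵥ q), real_inner_comm (z -ᵥ q)]
  ring

theorem dist_lineMap_sq (a b p : P) (t : ℝ) :
    dist (AffineMap.lineMap a b t) p ^ 2 =
      (1 - t) * dist a p ^ 2 + t * dist b p ^ 2 - t * (1 - t) * dist a b ^ 2 := by
  have hb : dist b p ^ 2 = dist b a ^ 2 + 2 * inner ℝ (b -ᵥ a) (a -ᵥ p) + dist a p ^ 2 := by
    simp only [dist_eq_norm_vsub V, ← norm_add_sq_real, vsub_add_vsub_cancel]
  rw [hb, AffineMap.lineMap_apply, sq (dist _ p), EuclideanGeometry.dist_smul_vadd_sq,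
    real_inner_self_eq_norm_sq, real_inner_self_eq_norm_sq, ← dist_eq_norm_vsub,
    ← dist_eq_norm_vsub, dist_comm a b]
  ring

variable {y : ι → P}

theorem eq_of_dist_sq_eq_add_const (hy : affineSpan ℝ (range y) = ⊤) {x z : P} {c : ℝ}
    (h : ∀ i, dist x (y i) ^ 2 = dist z (y i) ^ 2 + c) : x = z := by
  have span_le : vectorSpan ℝ (range y) ≤ (ℝ ∙ (x -ᵥ z))ᗮ := by
    rw [vectorSpan_def, Submodule.span_le]
    rintro _ ⟨_, ⟨i, rfl⟩, _, ⟨j, rfl⟩, rfl⟩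
    rw [SetLike.mem_coe, Submodule.mem_orthogonal_singleton_iff_inner_left]
    linarith [two_mul_inner_vsub_vsub_eq_dist_sq (y i) (y j) x z, h i, h j]
  rw [AffineSubspace.vectorSpan_eq_top_of_affineSpan_eq_top ℝ V P hy] at span_le
  rw [← vsub_eq_zero_iff_eq (G := V), ← inner_self_eq_zero (𝕜 := ℝ)]
  exact Submodule.mem_orthogonal_singleton_iff_inner_left.1 (span_le Submodule.mem_top)

theorem eq_or_eq_of_dist_sq_interpolate (hy : affineSpan ℝ (range y) = ⊤) {a b x : P} {t : ℝ}
    (h : ∀ i, dist x (y i) ^ 2 = (1 - t) * dist a (y i) ^ 2 + t * dist b (y i) ^ 2) :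
    x = a ∨ x = b := by
  have hx : x = AffineMap.lineMap a b t :=
    eq_of_dist_sq_eq_add_const hy (c := t * (1 - t) * dist a b ^ 2) fun i ↦ by
      rw [h, dist_lineMap_sq, sub_add_cancel]
  obtain ⟨_, i, rfl⟩ : (range y).Nonempty := AffineSubspace.nonempty_of_affineSpan_eq_top ℝ V P hy
  have defect_eq_zero : t * (1 - t) * dist a b ^ 2 = 0 := by
    linarith [h i, hx ▸ dist_lineMap_sq a b (y i) t]
  rcases mul_eq_zero.1 defect_eq_zero with ht | hab
  · rcases mul_eq_zero.1 ht with rfl | ht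
    · exact .inl (hx.trans (AffineMap.lineMap_apply_zero a b))
    · obtain rfl : t = 1 := by linarith
      exact .inr (hx.trans (AffineMap.lineMap_apply_one a b))
  · obtain rfl : a = b := dist_eq_zero.1 (pow_eq_zero_iff two_ne_zero |>.1 hab)
    exact .inl (hx.trans (AffineMap.lineMap_same_apply a t))

theorem encard_setOf_dist_sq_eq_mul_add_le_two (hy : affineSpan ℝ (range y) = ⊤) (m c : ι → ℝ) :
    {x | ∃ h, ∀ i, dist x (y i) ^ 2 = m i * h + c i}.encard ≤ 2 := by
  refine encard_le_two_of_forall_eq_or_eq ?_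
  rintro a ⟨ha, hda⟩ b ⟨hb, hdb⟩ hab x ⟨hx, hdx⟩
  have hba : hb - ha ≠ 0 := by
    intro heq
    refine hab (eq_of_dist_sq_eq_add_const hy (c := 0) fun i ↦ ?_)
    rw [hda, hdb, sub_eq_zero.1 heq, add_zero]
  refine eq_or_eq_of_dist_sq_interpolate hy (t := (hx - ha) / (hb - ha)) fun i ↦ ?_
  rw [hda, hdb, hdx]
  field_simp
  ring

theorem affineSpan_range_eq_top_of_not_collinear (hV : Module.finrank ℝ V = 2) {p q r : P}
    (h : ¬ Collinear ℝ {p, q, r}) : affineSpan ℝ (range ![p, q, r]) = ⊤ := by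
  have : FiniteDimensional ℝ V := .of_finrank_eq_succ hV
  rw [(affineIndependent_iff_not_collinear_set.2 h).affineSpan_eq_top_iff_card_eq_finrank_add_one,
    hV, Fintype.card_fin]

end SquaredDistances

section Reflector

variable {ι E : Type*} [NormedAddCommGroup E]

/-- The generating function `G(x, y, v)` of the near-field parallel reflector problem. It is
meaningful for `v ≠ 0` only: at `v = 0` division by zero makes it vanish identically. -/
def reflectorG (x y : E) (v : ℝ) : ℝ := 1 / (2 * v) - v / 2 * ‖x - y‖ ^ 2

/-- The interface `Γᵢⱼ(ψ)` in `Ω` between the cells of `y i` and `y j`. -/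
def reflectorInterface (Ω : Set E) (y : ι → E) (ψ : ι → ℝ) (i j : ι) : Set E :=
  {x ∈ Ω | reflectorG x (y i) (ψ i) = reflectorG x (y j) (ψ j)}

theorem dist_sq_of_reflectorG_eq {x y : E} {v h : ℝ} (hv : v ≠ 0) (hG : reflectorG x y v = h) :
    dist x y ^ 2 = -(2 / v) * h + 1 / v ^ 2 := by
  rw [← hG, reflectorG, dist_eq_norm]
  field_simp
  ring

variable [InnerProductSpace ℝ E]

theorem encard_setOf_reflectorG_eq_le_two {y : ι → E} (hy : affineSpan ℝ (range y) = ⊤)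
    {ψ : ι → ℝ} (hψ : ∀ i, ψ i ≠ 0) :
    {x | ∃ h, ∀ i, reflectorG x (y i) (ψ i) = h}.encard ≤ 2 := by
  refine (encard_le_encard ?_).trans
    (encard_setOf_dist_sq_eq_mul_add_le_two hy (fun i ↦ -(2 / ψ i)) fun i ↦ 1 / ψ i ^ 2)
  rintro x ⟨h, hG⟩
  exact ⟨h, fun i ↦ dist_sq_of_reflectorG_eq (hψ i) (hG i)⟩

theorem reflector_genericity_general (hE : Module.finrank ℝ E = 2) (Ω : Set E) (y : ι → E)
    {ψ : ι → ℝ} (hψ : ∀ i, ψ i ≠ 0) {i j k : ι} (hcol : ¬ Collinear ℝ {y i, y j, y k}) :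
    (reflectorInterface Ω y ψ i j ∩ reflectorInterface Ω y ψ i k).encard ≤ 2 := by
  have hspan := affineSpan_range_eq_top_of_not_collinear hE hcol
  have hψ' : ∀ l, ![ψ i, ψ j, ψ k] l ≠ 0 := by simp [Fin.forall_fin_succ, hψ]
  refine (encard_le_encard ?_).trans (encard_setOf_reflectorG_eq_le_two hspan hψ')
  rintro x ⟨⟨-, hij⟩, -, hik⟩
  exact ⟨reflectorG x (y i) (ψ i), by simp [Fin.forall_fin_succ, ← hij, ← hik]⟩

end Reflector

/-- The near-field reflector generating function is generic (condition `Gen_Ω`) as soon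
as no three target points are collinear: triple interfaces are `ℋ¹`-negligible. -/
theorem reflector_genericity
    (Ω : Set (EuclideanSpace ℝ (Fin 2))) (hΩo : IsOpen Ω) (hΩb : Bornology.IsBounded Ω)
    {N : ℕ} (y : Fin N → EuclideanSpace ℝ (Fin 2)) (hy : Function.Injective y)
    (hcol : ∀ i j k : Fin N, i ≠ j → i ≠ k → j ≠ k →
      ¬ Collinear ℝ ({y i, y j, y k} : Set (EuclideanSpace ℝ (Fin 2)))) :
    ∀ ψ : Fin N → ℝ, (∀ i, 0 < ψ i) → ∀ i j k : Fin N, i ≠ j → i ≠ k → j ≠ k →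
      μH[(1 : ℝ)]
        (({x ∈ Ω | 1 / (2 * ψ i) - ψ i / 2 * ‖x - y i‖ ^ 2 =
            1 / (2 * ψ j) - ψ j / 2 * ‖x - y j‖ ^ 2} : Set (EuclideanSpace ℝ (Fin 2))) ∩
         {x ∈ Ω | 1 / (2 * ψ i) - ψ i / 2 * ‖x - y i‖ ^ 2 =
            1 / (2 * ψ k) - ψ k / 2 * ‖x - y k‖ ^ 2}) = 0 := by
  intro ψ hψ i j k hij hik hjk
  have := Measure.nullSingletonClass_hausdorff (EuclideanSpace ℝ (Fin 2)) one_pos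
  exact (finite_of_encard_le_coe <| reflector_genericity_general finrank_euclideanSpace_fin Ω y
    (fun l ↦ (hψ l).ne') (hcol i j k hij hik hjk)).measure_zero _
end
end
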